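/- arXiv:1602.01337 — 6 statements merged into one kernel-verified Lean document; each statement's English description precedes it below -/
import Mathlib

section
/- Let m = p^k where p > 2 is a prime number and k is a positive integer, and let n be a positive integer. Then the crown C_m ⊙ K̄_n is perfect edge-magic: for every integer j with 2mn + (5m+3)/2 ≤ j ≤ 4mn + (7m+3)/2 there exists an edge-magic labeling of C_m ⊙ K̄_n with valence j. -/
/-- An edge-magic labeling of a finite graph presented by an endpoint map
`ends : E → V × V` (loops and multiple edges allowed): the vertex labels `fv`
and edge labels `fe` together form a bijection onto `{1, …, |V| + |E|}` and
every edge `e` satisfies `fv (ends e).1 + fe e + fv (ends e).2 = k`.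
The constant `k` is the valence. -/
def IsEdgeMagic {V E : Type} [Fintype V] [Fintype E] (ends : E → V × V)
    (fv : V → ℕ) (fe : E → ℕ) (k : ℕ) : Prop :=
  Function.Injective (Sum.elim fv fe) ∧
  Set.range (Sum.elim fv fe) = Set.Icc 1 (Fintype.card V + Fintype.card E) ∧
  ∀ e : E, fv (ends e).1 + fe e + fv (ends e).2 = k

/-- A super edge-magic labeling: edge-magic, and moreover the vertex labels
are exactly `{1, …, |V|}`. -/
def IsSuperEdgeMagic {V E : Type} [Fintype V] [Fintype E] (ends : E → V × V)
    (fv : V → ℕ) (fe : E → ℕ) (k : ℕ) : Prop :=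
  IsEdgeMagic ends fv fe k ∧ Set.range fv = Set.Icc 1 (Fintype.card V)

/-- The cycle `C_m`: vertices `Fin m`, edge `i` joins `i` to `i+1 (mod m)`. -/
def cycleEnds (m : ℕ) : Fin m → Fin m × Fin m :=
  fun i => (i, ⟨(i.val + 1) % m, Nat.mod_lt _ i.pos⟩)

/-- The crown `C_m ⊙ K̄_n`: vertices are `Sum.inl i` (cycle vertices `v_i`) and
`Sum.inr (i, j)` (pendant vertices `v_i^j`); edges are the `m` cycle edges and
the `m * n` pendant edges. -/
def crownEnds (m n : ℕ) :
    (Fin m ⊕ Fin m × Fin n) → (Fin m ⊕ Fin m × Fin n) × (Fin m ⊕ Fin m × Fin n)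
  | Sum.inl i => (Sum.inl i, Sum.inl ⟨(i.val + 1) % m, Nat.mod_lt _ i.pos⟩)
  | Sum.inr p => (Sum.inl p.1, Sum.inr p)

/-- The graph `K_{1,n}^l`: the star `K_{1,n}` (center `none`, leaves `some j`)
with a loop (edge `none`) attached at the center. -/
def starLoopEnds (n : ℕ) : Option (Fin n) → Option (Fin n) × Option (Fin n)
  | none => (none, none)
  | some j => (none, some j)

/-- General criterion: injectivity and bounds suffice. -/
lemma isEdgeMagic_of_bounds {V E : Type} [Fintype V] [Fintype E] (ends : E → V × V)
    (fv : V → ℕ) (fe : E → ℕ) (k : ℕ)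
    (hinj : Function.Injective (Sum.elim fv fe))
    (hv : ∀ v, 1 ≤ fv v ∧ fv v ≤ Fintype.card V + Fintype.card E)
    (he : ∀ e, 1 ≤ fe e ∧ fe e ≤ Fintype.card V + Fintype.card E)
    (hk : ∀ e : E, fv (ends e).1 + fe e + fv (ends e).2 = k) :
    IsEdgeMagic ends fv fe k := by
  classical
  refine ⟨hinj, ?_, hk⟩
  have h1 : Finset.univ.image (Sum.elim fv fe)
      = Finset.Icc 1 (Fintype.card V + Fintype.card E) := by
    apply Finset.eq_of_subset_of_card_le
    · intro z hz
      simp only [Finset.mem_image, Finset.mem_univ, true_and] at hz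
      obtain ⟨a, rfl⟩ := hz
      rw [Finset.mem_Icc]
      cases a with
      | inl v => exact hv v
      | inr e => exact he e
    · rw [Finset.card_image_of_injective _ hinj]
      simp
  have h2 := congrArg (fun s : Finset ℕ => (s : Set ℕ)) h1
  simpa using h2

/-- The four labelings derived from a consecutive-sum vertex labeling. -/
lemma four_labelings {V E : Type} [Fintype V] [Fintype E] (ends : E → V × V)
    (M S : ℕ) (hV : Fintype.card V = M) (hE : Fintype.card E = M)
    (g : V → ℕ) (hg : Function.Injective g) (hgM : ∀ v, g v < M)
    (hw : Function.Injective (fun e => g (ends e).1 + g (ends e).2))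
    (hwl : ∀ e, S ≤ g (ends e).1 + g (ends e).2)
    (hwu : ∀ e, g (ends e).1 + g (ends e).2 < S + M) :
    (∃ fv fe, IsEdgeMagic ends fv fe (2 * M + S + 2)) ∧
    (∃ fv fe, IsEdgeMagic ends fv fe (4 * M + 1 - S)) ∧
    (∃ fv fe, IsEdgeMagic ends fv fe (2 * S + 2 * M + 2)) ∧
    (∃ fv fe, IsEdgeMagic ends fv fe (2 * S + 2 * M + 3)) := by
  have hw' : ∀ e e', g (ends e).1 + g (ends e).2 = g (ends e').1 + g (ends e').2 → e = e' :=
    fun e e' h => hw h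
  refine ⟨⟨fun v => g v + 1, fun e => 2 * M + S - (g (ends e).1 + g (ends e).2), ?_⟩,
    ⟨fun v => 2 * M - g v, fun e => 1 + (g (ends e).1 + g (ends e).2) - S, ?_⟩,
    ⟨fun v => 2 * g v + 1, fun e => 2 * (S + M - (g (ends e).1 + g (ends e).2)), ?_⟩,
    ⟨fun v => 2 * g v + 2, fun e => 2 * (S + M - (g (ends e).1 + g (ends e).2)) - 1, ?_⟩⟩
  all_goals
    apply isEdgeMagic_of_bounds
    · rintro (a | a) (b | b) hab <;> simp only [Sum.elim_inl, Sum.elim_inr] at hab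
      · have := hgM a
        have := hgM b
        rw [hg (show g a = g b by omega)]
      · have := hgM a
        have := hwl b
        have := hwu b
        omega
      · have := hgM b
        have := hwl a
        have := hwu a
        omega
      · have := hwl b
        have := hwu b
        have := hwl a
        have := hwu a
        rw [hw' a b (by omega)]
    · intro v
      have := hgM v
      rw [hV, hE]
      omega
    · intro e
      have := hwl e
      have := hwu e
      rw [hV, hE]
      omega
    · intro e
      have := hwl e
      have := hwu e
      have := hgM (ends e).1
      have := hgM (ends e).2
      omega

/-- Uniqueness of quotient and remainder. -/
lemma digits_unique {m x y a b : ℕ} (hx : x < m) (hy : y < m)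
    (h : x + m * a = y + m * b) : x = y ∧ a = b := by
  have hm : 0 < m := by omega
  have h1 := congrArg (· % m) h
  have h2 := congrArg (· / m) h
  simp only [Nat.add_mul_mod_self_left, Nat.mod_eq_of_lt hx, Nat.mod_eq_of_lt hy] at h1
  simp only [Nat.add_mul_div_left _ _ hm, Nat.div_eq_of_lt hx, Nat.div_eq_of_lt hy] at h2
  omega

/-- `j`-th element of `ℕ \ {c}`. -/
def skipAt (c j : ℕ) : ℕ := if j < c then j else j + 1

lemma skipAt_ne (c j : ℕ) : skipAt c j ≠ c := by
  unfold skipAt; split_ifs <;> omega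

lemma skipAt_inj {c j l : ℕ} (h : skipAt c j = skipAt c l) : j = l := by
  unfold skipAt at h; split_ifs at h <;> omega

lemma skipAt_le {c j n : ℕ} (h : j < n) : skipAt c j ≤ n := by
  unfold skipAt; split_ifs <;> omega

/-- Column of the `i`-th cycle vertex. -/
def colX (h i : ℕ) : ℕ := (i * h) % (2 * h + 1)

/-- Row of the center in column `x`. -/
def rowC (h c u x : ℕ) : ℕ :=
  c + if x + (x + h) % (2 * h + 1) < h + u then 1 else 0

lemma colX_lt (h i : ℕ) : colX h i < 2 * h + 1 := Nat.mod_lt _ (by omega)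

lemma colX_succ (h i : ℕ) : colX h ((i + 1) % (2 * h + 1)) = (colX h i + h) % (2 * h + 1) := by
  unfold colX
  rw [Nat.mod_mul_mod, Nat.mod_add_mod]
  congr 1
  ring

lemma colX_inj (h i j : ℕ) (hi : i < 2 * h + 1) (hj : j < 2 * h + 1)
    (hij : colX h i = colX h j) : i = j := by
  have hc : Nat.gcd (2 * h + 1) h = 1 := by
    simp
  have h1 : i * h ≡ j * h [MOD (2 * h + 1)] := hij
  have h2 : i ≡ j [MOD (2 * h + 1)] := Nat.ModEq.cancel_right_of_coprime hc h1
  exact Nat.ModEq.eq_of_lt_of_lt h2 hi hj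

lemma shift_cases (h x : ℕ) (hx : x < 2 * h + 1) :
    (x ≤ h ∧ (x + h) % (2 * h + 1) = x + h) ∨
    (h < x ∧ (x + h) % (2 * h + 1) + h + 1 = x) := by
  rcases le_or_gt x h with hl | hl
  · exact Or.inl ⟨hl, Nat.mod_eq_of_lt (by omega)⟩
  · refine Or.inr ⟨hl, ?_⟩
    rw [Nat.mod_eq_sub_mod (by omega), Nat.mod_eq_of_lt (by omega)]
    omega

/-- Base sum: offset in `[0,m)`. -/
lemma base_exists (h c u x : ℕ) (hu : u < 2 * h + 1) (hx : x < 2 * h + 1) :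
    ∃ r, r < 2 * h + 1 ∧ x + (2 * h + 1) * rowC h c u x + (x + h) % (2 * h + 1)
      = h + u + r + (2 * h + 1) * c := by
  unfold rowC
  have e1 : (2 * h + 1) * (c + 1) = (2 * h + 1) * c + (2 * h + 1) := by ring
  generalize hP : (2 * h + 1) * c = P at *
  rcases shift_cases h x hx with ⟨h1, h2⟩ | ⟨h1, h2⟩
  · rw [h2]
    split_ifs with h3
    · rw [e1]; exact ⟨x + h + x + 2 * h + 1 - h - u, by omega, by omega⟩
    · rw [add_zero, hP]; exact ⟨x + h + x - h - u, by omega, by omega⟩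
  · generalize (x + h) % (2 * h + 1) = y at *
    split_ifs with h3
    · rw [e1]; exact ⟨x + y + 2 * h + 1 - h - u, by omega, by omega⟩
    · rw [add_zero, hP]; exact ⟨x + y - h - u, by omega, by omega⟩

/-- the base sums are injective in `x` (indeed modulo `m`). -/
lemma base_inj (h x x' a b : ℕ) (hx : x < 2 * h + 1) (hx' : x' < 2 * h + 1)
    (hab : x + (x + h) % (2 * h + 1) + (2 * h + 1) * a
      = x' + (x' + h) % (2 * h + 1) + (2 * h + 1) * b) : x = x' := by
  have h1 : x + (x + h) ≡ x' + (x' + h) [MOD (2 * h + 1)] := by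
    have := congrArg (· % (2 * h + 1)) hab
    simpa [Nat.ModEq, Nat.add_mul_mod_self_left] using this
  have h2 : 2 * x ≡ 2 * x' [MOD (2 * h + 1)] := by
    apply Nat.ModEq.add_right_cancel' h
    convert h1 using 1 <;> ring
  have hc : Nat.gcd (2 * h + 1) 2 = 1 := by
    simp
  exact Nat.ModEq.eq_of_lt_of_lt (Nat.ModEq.cancel_left_of_coprime hc h2) hx hx'

/-- The consecutive-sum labeling of the crown. -/
def crownG (h n c u : ℕ) : (Fin (2 * h + 1) ⊕ Fin (2 * h + 1) × Fin n) → ℕ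
  | Sum.inl i => colX h i + (2 * h + 1) * rowC h c u (colX h i)
  | Sum.inr p => (colX h p.1 + h) % (2 * h + 1) +
      (2 * h + 1) * skipAt (rowC h c u ((colX h p.1 + h) % (2 * h + 1))) p.2

/-- index of an edge. -/
def edgeIdx {m n : ℕ} : (Fin m ⊕ Fin m × Fin n) → Fin m
  | Sum.inl i => i
  | Sum.inr p => p.1

/-- row of an edge. -/
def edgeRow (h n c u : ℕ) : (Fin (2 * h + 1) ⊕ Fin (2 * h + 1) × Fin n) → ℕ
  | Sum.inl i => rowC h c u ((colX h i + h) % (2 * h + 1))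
  | Sum.inr p => skipAt (rowC h c u ((colX h p.1 + h) % (2 * h + 1))) p.2

lemma edge_sum (h n c u : ℕ) (e : Fin (2 * h + 1) ⊕ Fin (2 * h + 1) × Fin n) :
    crownG h n c u (crownEnds (2 * h + 1) n e).1 + crownG h n c u (crownEnds (2 * h + 1) n e).2
     = (colX h (edgeIdx e) + (2 * h + 1) * rowC h c u (colX h (edgeIdx e))
        + (colX h (edgeIdx e) + h) % (2 * h + 1)) + (2 * h + 1) * edgeRow h n c u e := by
  rcases e with i | p
  · simp only [crownEnds, crownG, edgeIdx, edgeRow, colX_succ]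
    ring
  · simp only [crownEnds, crownG, edgeIdx, edgeRow]
    ring

lemma edge_pair_inj (h n c u : ℕ) (e e' : Fin (2 * h + 1) ⊕ Fin (2 * h + 1) × Fin n)
    (h1 : edgeIdx e = edgeIdx e') (h2 : edgeRow h n c u e = edgeRow h n c u e') : e = e' := by
  rcases e with i | ⟨i, j⟩ <;> rcases e' with i' | ⟨i', j'⟩ <;>
    simp only [edgeIdx, edgeRow] at h1 h2 <;> subst h1
  · rfl
  · exact absurd h2.symm (skipAt_ne _ _)
  · exact absurd h2 (skipAt_ne _ _)
  · rw [Fin.ext (skipAt_inj h2)]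

lemma crownG_inj (h n c u : ℕ) : Function.Injective (crownG h n c u) := by
  have hs : ∀ i : Fin (2 * h + 1), (colX h i + h) % (2 * h + 1) < 2 * h + 1 :=
    fun i => Nat.mod_lt _ (by omega)
  rintro (i | ⟨i, j⟩) (i' | ⟨i', j'⟩) hab <;> simp only [crownG] at hab
  · have := digits_unique (colX_lt h i) (colX_lt h i') hab
    rw [Fin.ext (colX_inj h i i' i.2 i'.2 this.1)]
  · obtain ⟨h1, h2⟩ := digits_unique (colX_lt h i) (hs i') hab
    rw [h1] at h2
    exact absurd h2.symm (skipAt_ne _ _)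
  · obtain ⟨h1, h2⟩ := digits_unique (hs i) (colX_lt h i') hab
    rw [← h1] at h2
    exact absurd h2 (skipAt_ne _ _)
  · obtain ⟨h1, h2⟩ := digits_unique (hs i) (hs i') hab
    have h3 : colX h i ≡ colX h i' [MOD (2 * h + 1)] := Nat.ModEq.add_right_cancel' h h1
    have h4 := Nat.ModEq.eq_of_lt_of_lt h3 (colX_lt h i) (colX_lt h i')
    have h5 : i = i' := Fin.ext (colX_inj h i i' i.2 i'.2 h4)
    subst h5
    rw [Fin.ext (skipAt_inj h2)]

lemma rowC_le (h n c u x : ℕ) (hx : x < 2 * h + 1) (hc : c < n ∨ (c = n ∧ u = 0)) :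
    rowC h c u x ≤ n := by
  unfold rowC
  rcases shift_cases h x hx with ⟨h1, h2⟩ | ⟨h1, h2⟩
  · rw [h2]; split_ifs <;> omega
  · split_ifs <;> omega

lemma crown_consecutive (h n t : ℕ) (ht : t ≤ (2 * h + 1) * n) :
    ∃ g : (Fin (2 * h + 1) ⊕ Fin (2 * h + 1) × Fin n) → ℕ, Function.Injective g ∧
      (∀ v, g v < (2 * h + 1) * (n + 1)) ∧
      Function.Injective (fun e => g (crownEnds (2 * h + 1) n e).1
        + g (crownEnds (2 * h + 1) n e).2) ∧
      (∀ e, h + t ≤ g (crownEnds (2 * h + 1) n e).1 + g (crownEnds (2 * h + 1) n e).2) ∧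
      (∀ e, g (crownEnds (2 * h + 1) n e).1 + g (crownEnds (2 * h + 1) n e).2
        < h + t + (2 * h + 1) * (n + 1)) := by
  obtain ⟨c, u, hu, rfl⟩ : ∃ c u, u < 2 * h + 1 ∧ t = (2 * h + 1) * c + u :=
    ⟨t / (2 * h + 1), t % (2 * h + 1), Nat.mod_lt _ (by omega), (Nat.div_add_mod _ _).symm⟩
  have hc : c < n ∨ (c = n ∧ u = 0) := by
    rcases lt_trichotomy c n with h1 | h1 | h1
    · exact Or.inl h1
    · subst h1; exact Or.inr ⟨rfl, by omega⟩
    · exfalso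
      have : (2 * h + 1) * (n + 1) ≤ (2 * h + 1) * c := Nat.mul_le_mul_left _ h1
      rw [Nat.mul_add] at this
      omega
  have hs : ∀ y, (y + h) % (2 * h + 1) < 2 * h + 1 := fun i => Nat.mod_lt _ (by omega)
  have hdig : ∀ x r, x < 2 * h + 1 → r ≤ n → x + (2 * h + 1) * r < (2 * h + 1) * (n + 1) := by
    intro x r hx hr
    have : (2 * h + 1) * r ≤ (2 * h + 1) * n := Nat.mul_le_mul_left _ hr
    rw [Nat.mul_add]
    omega
  have hrow : ∀ e, edgeRow h n c u e ≤ n := by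
    rintro (i | ⟨i, j⟩)
    · exact rowC_le h n c u _ (hs _) hc
    · exact skipAt_le j.2
  refine ⟨crownG h n c u, crownG_inj h n c u, ?_, ?_, ?_, ?_⟩
  · rintro (i | ⟨i, j⟩)
    · exact hdig _ _ (colX_lt _ _) (rowC_le h n c u _ (colX_lt _ _) hc)
    · exact hdig _ _ (hs _) (skipAt_le j.2)
  · intro e e' hee
    simp only [edge_sum] at hee
    have h1 : colX h (edgeIdx e) = colX h (edgeIdx e') := by
      apply base_inj h _ _ (rowC h c u (colX h (edgeIdx e)) + edgeRow h n c u e)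
        (rowC h c u (colX h (edgeIdx e')) + edgeRow h n c u e') (colX_lt _ _) (colX_lt _ _)
      rw [Nat.mul_add, Nat.mul_add]
      omega
    have h2 : edgeIdx e = edgeIdx e' := Fin.ext (colX_inj h _ _ (edgeIdx e).2 (edgeIdx e').2 h1)
    rw [h1] at hee
    have h3 := Nat.add_left_cancel hee
    exact edge_pair_inj h n c u e e' h2 (Nat.eq_of_mul_eq_mul_left (by omega) h3)
  · intro e
    rw [edge_sum]
    obtain ⟨r, hr, hr2⟩ := base_exists h c u (colX h (edgeIdx e)) hu (colX_lt _ _)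
    rw [hr2]
    generalize (2 * h + 1) * edgeRow h n c u e = Q
    omega
  · intro e
    rw [edge_sum]
    obtain ⟨r, hr, hr2⟩ := base_exists h c u (colX h (edgeIdx e)) hu (colX_lt _ _)
    rw [hr2]
    have := hdig r _ hr (hrow e)
    omega


/-- for m = p^k an odd prime power and n ≥ 1, the crown
C_m ⊙ K̄_n is perfect edge-magic: every integer j with
2mn + (5m+3)/2 ≤ j ≤ 4mn + (7m+3)/2 is the valence of an edge-magic
labeling of C_m ⊙ K̄_n. -/
theorem crown_primePower_perfectEdgeMagic (p k n m : ℕ) (hp : p.Prime)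
    (hp2 : 2 < p) (hk : 1 ≤ k) (hn : 1 ≤ n) (hm : m = p ^ k) :
    ∀ j : ℕ, 2 * m * n + (5 * m + 3) / 2 ≤ j → j ≤ 4 * m * n + (7 * m + 3) / 2 →
      ∃ fv fe, IsEdgeMagic (crownEnds m n) fv fe j := by
  have hodd : Odd m := by
    rw [hm]; exact (hp.odd_of_ne_two (by omega)).pow
  obtain ⟨h, hh⟩ := hodd
  clear hm
  subst hh
  intro j hj1 hj2
  have e1 : 2 * (2 * h + 1) * n = 2 * ((2 * h + 1) * n) := by ring
  have e2 : 4 * (2 * h + 1) * n = 4 * ((2 * h + 1) * n) := by ring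
  have e3 : (2 * h + 1) * (n + 1) = (2 * h + 1) * n + (2 * h + 1) := by ring
  have hP : 2 * h + 1 ≤ (2 * h + 1) * n := Nat.le_mul_of_pos_right _ hn
  have key : ∀ t, t ≤ (2 * h + 1) * n →
      (∃ fv fe, IsEdgeMagic (crownEnds (2 * h + 1) n) fv fe
        (2 * ((2 * h + 1) * (n + 1)) + (h + t) + 2)) ∧
      (∃ fv fe, IsEdgeMagic (crownEnds (2 * h + 1) n) fv fe
        (4 * ((2 * h + 1) * (n + 1)) + 1 - (h + t))) ∧
      (∃ fv fe, IsEdgeMagic (crownEnds (2 * h + 1) n) fv fe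
        (2 * (h + t) + 2 * ((2 * h + 1) * (n + 1)) + 2)) ∧
      (∃ fv fe, IsEdgeMagic (crownEnds (2 * h + 1) n) fv fe
        (2 * (h + t) + 2 * ((2 * h + 1) * (n + 1)) + 3)) := by
    intro t ht
    obtain ⟨g, g1, g2, g3, g4, g5⟩ := crown_consecutive h n t ht
    exact four_labelings (crownEnds (2 * h + 1) n) ((2 * h + 1) * (n + 1)) (h + t)
      (by simp; ring) (by simp; ring) g g1 g2 g3 g4 g5
  rw [e1] at hj1
  rw [e2] at hj2
  rw [e3] at key
  generalize (2 * h + 1) * n = P at *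
  by_cases c1 : j ≤ 3 * P + 5 * h + 4
  · have := (key (j - (2 * P + 5 * h + 4)) (by omega)).1
    obtain ⟨fv, fe, hf⟩ := this
    refine ⟨fv, fe, ?_⟩
    convert hf using 1
    omega
  by_cases c2 : 3 * P + 7 * h + 5 ≤ j
  · have := (key (4 * P + 7 * h + 5 - j) (by omega)).2.1
    obtain ⟨fv, fe, hf⟩ := this
    refine ⟨fv, fe, ?_⟩
    convert hf using 1
    omega
  rcases Nat.even_or_odd' (j - (2 * P + 6 * h + 4)) with ⟨t, ht | ht⟩
  · have := (key t (by omega)).2.2.1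
    obtain ⟨fv, fe, hf⟩ := this
    refine ⟨fv, fe, ?_⟩
    convert hf using 1
    omega
  · have := (key t (by omega)).2.2.2
    obtain ⟨fv, fe, hf⟩ := this
    refine ⟨fv, fe, ?_⟩
    convert hf using 1
    omega
end

section
/- For every even integer n ≥ 4, the cycle C_n admits an edge-magic labeling with valence (5n+4)/2. -/
/-- From label functions on `ℕ` to an edge-magic labeling of the cycle. -/
lemma edgeMagic_of_nat (n k : ℕ) (f g : ℕ → ℕ)
    (hf : ∀ p, p < n → 1 ≤ f p ∧ f p ≤ 2 * n)
    (hg : ∀ p, p < n → 1 ≤ g p ∧ g p ≤ 2 * n)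
    (hff : ∀ p q, p < n → q < n → f p = f q → p = q)
    (hgg : ∀ p q, p < n → q < n → g p = g q → p = q)
    (hfg : ∀ p q, p < n → q < n → f p ≠ g q)
    (hs : ∀ p, p + 1 < n → f p + g p + f (p + 1) = k)
    (hl : ∀ p, p + 1 = n → f p + g p + f 0 = k) :
    ∃ fv fe, IsEdgeMagic (cycleEnds n) fv fe k := by
  have hinj : Function.Injective
      (Sum.elim (fun i : Fin n => f i.val) (fun i : Fin n => g i.val)) := by
    rintro (a | a) (b | b) h
    · exact congrArg _ (Fin.ext (hff _ _ a.2 b.2 h))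
    · exact absurd h (hfg _ _ a.2 b.2)
    · exact absurd h.symm (hfg _ _ b.2 a.2)
    · exact congrArg _ (Fin.ext (hgg _ _ a.2 b.2 h))
  refine ⟨fun i => f i.val, fun i => g i.val, hinj, ?_, ?_⟩
  · have hsub : Finset.univ.image
        (Sum.elim (fun i : Fin n => f i.val) (fun i : Fin n => g i.val))
        = Finset.Icc 1 (Fintype.card (Fin n) + Fintype.card (Fin n)) := by
      apply Finset.eq_of_subset_of_card_le
      · intro x hx
        simp only [Finset.mem_image, Finset.mem_univ, true_and] at hx
        obtain ⟨(a | a), rfl⟩ := hx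
        · have := hf _ a.2
          simp only [Sum.elim_inl, Finset.mem_Icc, Fintype.card_fin]
          omega
        · have := hg _ a.2
          simp only [Sum.elim_inr, Finset.mem_Icc, Fintype.card_fin]
          omega
      · rw [Finset.card_image_of_injective _ hinj]
        simp
    rw [← Finset.coe_Icc, ← hsub]
    simp
  · intro e
    have he := e.2
    simp only [cycleEnds]
    by_cases h : e.val + 1 = n
    · rw [h, Nat.mod_self]
      exact hl _ h
    · rw [Nat.mod_eq_of_lt (by omega)]
      exact hs _ (by omega)

/-- Vertex labels for `n = 4 t`. -/
def labA (t p : ℕ) : ℕ :=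
  if p = 1 then 6 * t
  else if p ≤ 2 * t then (if p % 2 = 0 then p / 2 + 1 else 2 * t + (p + 1) / 2)
  else (if p % 2 = 0 then 2 * t + p / 2 else (p + 3) / 2)

/-- Edge labels for `n = 4 t`. -/
def edgA (t p : ℕ) : ℕ :=
  if p = 0 then 4 * t + 1 else if p = 1 then 4 * t
  else if p = 2 * t then 8 * t - 1 else if p = 4 * t - 1 then 8 * t
  else 8 * t - p

/-- Vertex labels for `n = 4 t + 2`. -/
def labB (t p : ℕ) : ℕ :=
  if p = 1 then 6 * t + 3 else if p = 2 * t + 1 then t + 2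
  else if p = 2 * t + 2 then 3 * t + 1
  else if p % 2 = 0 then p / 2 + 1 else (4 * t + 1 + p) / 2

/-- Edge labels for `n = 4 t + 2`. -/
def edgB (t p : ℕ) : ℕ :=
  if p = 0 then 4 * t + 3 else if p = 1 then 4 * t + 2
  else if p = 2 * t then 8 * t + 4 else if p = 2 * t + 2 then 4 * t + 4
  else if p = 4 * t + 1 then 6 * t + 5
  else 8 * t + 5 - p

lemma caseA (t : ℕ) (ht : 1 ≤ t) :
    ∃ fv fe, IsEdgeMagic (cycleEnds (4 * t)) fv fe (10 * t + 2) := by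
  apply edgeMagic_of_nat _ _ (labA t) (edgA t)
  all_goals intros
  all_goals simp only [labA, edgA] at *
  all_goals grind (splits := 25)

lemma caseB (t : ℕ) (ht : 1 ≤ t) :
    ∃ fv fe, IsEdgeMagic (cycleEnds (4 * t + 2)) fv fe (10 * t + 7) := by
  apply edgeMagic_of_nat _ _ (labB t) (edgB t)
  all_goals intros
  all_goals simp only [labB, edgB] at *
  all_goals grind (splits := 25)

/-- every even cycle C_n (n ≥ 4) has an edge-magic labeling
with valence (5n+4)/2. -/
theorem evenCycle_edgeMagic (n : ℕ) (hn : 4 ≤ n) (he : Even n) :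
    ∃ fv fe, IsEdgeMagic (cycleEnds n) fv fe ((5 * n + 4) / 2) := by
  obtain ⟨m, rfl⟩ := he
  obtain ⟨t, rfl | rfl⟩ := Nat.even_or_odd' m
  · have h := caseA t (by omega)
    rwa [show 2 * t + 2 * t = 4 * t by ring, show (5 * (4 * t) + 4) / 2 = 10 * t + 2 by omega]
  · have h := caseB t (by omega)
    rwa [show 2 * t + 1 + (2 * t + 1) = 4 * t + 2 by ring,
      show (5 * (4 * t + 2) + 4) / 2 = 10 * t + 7 by omega]
end

section
/- Let m = 2^α p_1^{α_1} p_2^{α_2} ⋯ p_k^{α_k} be the prime factorization of an even number m ≥ 4, where p_1,…,p_k are distinct odd primes and α ≥ 1. Then the cycle C_m admits edge-magic labelings realizing at least α_1 + ⋯ + α_k mutually different valences; if moreover α ≥ 2, it admits edge-magic labelings realizing at least 1 + α_1 + ⋯ + α_k mutually different valences. -/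
/-- Edge-magic labelings of the cycle in terms of functions on `ℕ`. -/
structure EMCyc (m : ℕ) (g e : ℕ → ℕ) (k : ℕ) : Prop where
  vr : ∀ i < m, 1 ≤ g i ∧ g i ≤ 2 * m
  er : ∀ i < m, 1 ≤ e i ∧ e i ≤ 2 * m
  vi : ∀ i < m, ∀ j < m, g i = g j → i = j
  ei : ∀ i < m, ∀ j < m, e i = e j → i = j
  ve : ∀ i < m, ∀ j < m, g i ≠ e j
  s1 : ∀ i, i + 1 < m → g i + e i + g (i + 1) = k
  s2 : g (m - 1) + e (m - 1) + g 0 = k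

theorem EMCyc.isEdgeMagic {m : ℕ} {g e : ℕ → ℕ} {k : ℕ} (h : EMCyc m g e k) :
    IsEdgeMagic (cycleEnds m) (fun i => g i.val) (fun i => e i.val) k := by
  have inj : Function.Injective
      (Sum.elim (fun i : Fin m => g i.val) (fun i : Fin m => e i.val)) := by
    rintro (x | x) (y | y) hxy
    · simp only [Sum.elim_inl] at hxy
      rw [Fin.ext (h.vi x x.2 y y.2 hxy)]
    · exact absurd hxy (h.ve x x.2 y y.2)
    · exact absurd hxy.symm (h.ve y y.2 x x.2)
    · simp only [Sum.elim_inr] at hxy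
      rw [Fin.ext (h.ei x x.2 y y.2 hxy)]
  refine ⟨inj, ?_, ?_⟩
  · have himg : Finset.univ.image
        (Sum.elim (fun i : Fin m => g i.val) (fun i : Fin m => e i.val))
        = Finset.Icc 1 (Fintype.card (Fin m) + Fintype.card (Fin m)) := by
      apply Finset.eq_of_subset_of_card_le
      · intro z hz
        simp only [Finset.mem_image, Finset.mem_univ, true_and] at hz
        obtain ⟨x, rfl⟩ := hz
        rcases x with x | x
        · have := h.vr x x.2
          simp only [Sum.elim_inl, Finset.mem_Icc, Fintype.card_fin]; omega
        · have := h.er x x.2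
          simp only [Sum.elim_inr, Finset.mem_Icc, Fintype.card_fin]; omega
      · rw [Finset.card_image_of_injective _ inj]
        simp
    have := congrArg (fun s : Finset ℕ => (s : Set ℕ)) himg
    simpa using this
  · intro i
    simp only [cycleEnds]
    by_cases hi : i.val + 1 < m
    · rw [Nat.mod_eq_of_lt hi]; exact h.s1 _ hi
    · have h1 : i.val + 1 = m := by have := i.2; omega
      have h2 : i.val = m - 1 := by omega
      rw [h1, Nat.mod_self, h2]; exact h.s2

def bv0 (r p : ℕ) : ℕ :=
  if p = 4 * r - 2 then 1 else if p = 4 * r - 1 then 6 * r else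
  if p ≤ 2 * r - 2 then (if p % 2 = 0 then 2 + p / 2 else 2 * r + (p + 3) / 2)
  else (if p % 2 = 1 then (p + 5) / 2 else (4 * r + p + 2) / 2)

def be0 (r p : ℕ) : ℕ :=
  if p = 2 * r - 2 then 8 * r - 1 else if p = 4 * r - 3 then 8 * r else
  if p = 4 * r - 2 then 4 * r + 1 else if p = 4 * r - 1 then 4 * r else
  8 * r - 2 - p

theorem bv0_spec (r p : ℕ) (hr : 1 ≤ r) (hp : p < 4 * r) :
    (p = 4 * r - 2 ∧ bv0 r p = 1) ∨
    (p = 4 * r - 1 ∧ bv0 r p = 6 * r) ∨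
    (p ≤ 2 * r - 2 ∧ p % 2 = 0 ∧ bv0 r p = 2 + p / 2) ∨
    (p ≤ 2 * r - 2 ∧ p % 2 = 1 ∧ bv0 r p = 2 * r + (p + 3) / 2) ∨
    (2 * r - 2 < p ∧ p < 4 * r - 2 ∧ p % 2 = 1 ∧ bv0 r p = (p + 5) / 2) ∨
    (2 * r - 2 < p ∧ p < 4 * r - 2 ∧ p % 2 = 0 ∧ bv0 r p = (4 * r + p + 2) / 2) := by
  unfold bv0; split_ifs
  · exact Or.inl ⟨by omega, rfl⟩
  · exact Or.inr <| Or.inl ⟨by omega, rfl⟩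
  · exact Or.inr <| Or.inr <| Or.inl ⟨by omega, by omega, rfl⟩
  · exact Or.inr <| Or.inr <| Or.inr <| Or.inl ⟨by omega, by omega, rfl⟩
  · exact Or.inr <| Or.inr <| Or.inr <| Or.inr <| Or.inl ⟨by omega, by omega, by omega, rfl⟩
  · exact Or.inr <| Or.inr <| Or.inr <| Or.inr <| Or.inr <| ⟨by omega, by omega, by omega, rfl⟩

set_option maxHeartbeats 4000000 in
theorem base0 (r : ℕ) (hr : 1 ≤ r) : EMCyc (4 * r) (bv0 r) (be0 r) (10 * r + 2) := by
  constructor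
  · intro i hi; unfold bv0; split_ifs <;> omega
  · intro i hi; unfold be0; split_ifs <;> omega
  · intro i hi j hj
    rcases bv0_spec r i hr hi with h|h|h|h|h|h <;>
      rcases bv0_spec r j hr hj with h|h|h|h|h|h <;> omega
  · intro i hi j hj; unfold be0; split_ifs <;> omega
  · intro i hi j hj
    have h1 : i = 4 * r - 1 ∧ bv0 r i = 6 * r ∨ bv0 r i < 4 * r := by
      unfold bv0; split_ifs <;> omega
    have h2 : 4 * r ≤ be0 r j ∧ be0 r j ≠ 6 * r := by
      unfold be0; split_ifs <;> omega
    omega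
  · intro i hi
    rcases bv0_spec r i hr (by omega) with h|h|h|h|h|h <;> unfold be0 <;> split_ifs <;>
      first
      | (exfalso; omega)
      | (rcases bv0_spec r (i + 1) hr hi with h|h|h|h|h|h <;> omega)
  · unfold bv0 be0; split_ifs <;> omega

def bv2 (r p : ℕ) : ℕ :=
  if p = 4 * r then 1 else if p = 4 * r + 1 then 6 * r + 3 else
  if p = 2 * r - 1 then r + 2 else if p = 2 * r then 3 * r + 1 else
  if p ≤ 2 * r - 2 then (if p % 2 = 0 then 2 + p / 2 else 2 * r + 2 + (p - 1) / 2)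
  else (if p % 2 = 1 then 3 * r + 2 + (p - 2 * r - 1) / 2 else r + 3 + (p - 2 * r - 2) / 2)

def be2 (r p : ℕ) : ℕ :=
  if p = 2 * r - 2 then 8 * r + 4 else if p = 2 * r - 1 then 6 * r + 4 else
  if p = 2 * r then 4 * r + 4 else if p = 4 * r - 1 then 6 * r + 5 else
  if p = 4 * r then 4 * r + 3 else if p = 4 * r + 1 then 4 * r + 2 else
  8 * r + 3 - p

theorem bv2_spec (r p : ℕ) (hr : 1 ≤ r) (hp : p < 4 * r + 2) :
    (p = 4 * r ∧ bv2 r p = 1) ∨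
    (p = 4 * r + 1 ∧ bv2 r p = 6 * r + 3) ∨
    (p = 2 * r - 1 ∧ bv2 r p = r + 2) ∨
    (p = 2 * r ∧ bv2 r p = 3 * r + 1) ∨
    (p ≤ 2 * r - 2 ∧ p % 2 = 0 ∧ bv2 r p = 2 + p / 2) ∨
    (p ≤ 2 * r - 2 ∧ p % 2 = 1 ∧ bv2 r p = 2 * r + 2 + (p - 1) / 2) ∨
    (2 * r < p ∧ p < 4 * r ∧ p % 2 = 1 ∧ bv2 r p = 3 * r + 2 + (p - 2 * r - 1) / 2) ∨
    (2 * r < p ∧ p < 4 * r ∧ p % 2 = 0 ∧ bv2 r p = r + 3 + (p - 2 * r - 2) / 2) := by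
  unfold bv2; split_ifs
  · exact Or.inl ⟨by omega, rfl⟩
  · exact Or.inr <| Or.inl ⟨by omega, rfl⟩
  · exact Or.inr <| Or.inr <| Or.inl ⟨by omega, rfl⟩
  · exact Or.inr <| Or.inr <| Or.inr <| Or.inl ⟨by omega, rfl⟩
  · exact Or.inr <| Or.inr <| Or.inr <| Or.inr <| Or.inl ⟨by omega, by omega, rfl⟩
  · exact Or.inr <| Or.inr <| Or.inr <| Or.inr <| Or.inr <| Or.inl ⟨by omega, by omega, rfl⟩
  · exact Or.inr <| Or.inr <| Or.inr <| Or.inr <| Or.inr <| Or.inr <| Or.inl ⟨by omega, by omega, by omega, rfl⟩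
  · exact Or.inr <| Or.inr <| Or.inr <| Or.inr <| Or.inr <| Or.inr <| Or.inr <| ⟨by omega, by omega, by omega, rfl⟩

set_option maxHeartbeats 4000000 in
theorem base2 (r : ℕ) (hr : 1 ≤ r) :
    EMCyc (4 * r + 2) (bv2 r) (be2 r) (10 * r + 7) := by
  constructor
  · intro i hi; unfold bv2; split_ifs <;> omega
  · intro i hi; unfold be2; split_ifs <;> omega
  · intro i hi j hj
    rcases bv2_spec r i hr hi with h|h|h|h|h|h|h|h <;>
      rcases bv2_spec r j hr hj with h|h|h|h|h|h|h|h <;> omega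
  · intro i hi j hj; unfold be2; split_ifs <;> omega
  · intro i hi j hj
    have h1 : i = 4 * r + 1 ∧ bv2 r i = 6 * r + 3 ∨ bv2 r i < 4 * r + 2 := by
      unfold bv2; split_ifs <;> omega
    have h2 : 4 * r + 2 ≤ be2 r j ∧ be2 r j ≠ 6 * r + 3 := by
      unfold be2; split_ifs <;> omega
    omega
  · intro i hi
    rcases bv2_spec r i hr (by omega) with h|h|h|h|h|h|h|h <;> unfold be2 <;> split_ifs <;>
      first
      | (exfalso; omega)
      | (rcases bv2_spec r (i + 1) hr hi with h|h|h|h|h|h|h|h <;> omega)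
  · have h0 : bv2 r 0 = 2 := by
      unfold bv2
      rw [if_neg (by omega), if_neg (by omega), if_neg (by omega), if_neg (by omega),
        if_pos (by omega), if_pos (by omega)]
    rw [h0]
    unfold bv2 be2; split_ifs <;> omega

/-- vertex offset in lap `n - 1 - x`; `o` is the parity of the position -/
def offV (a x o : ℕ) : ℕ := if o = 0 then x else if x ≤ a then x + a else x - a - 1

/-- edge offset inside a lap -/
def offE (a x : ℕ) : ℕ := if x ≤ a then 2 * a - 2 * x else 4 * a + 1 - 2 * x

/-- edge offset for the edge joining two laps -/
def offL (a x : ℕ) : ℕ :=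
  if x = 0 then 0 else if x ≤ a then 2 * a + 1 - 2 * x else 4 * a + 2 - 2 * x

def prodV (a q : ℕ) (g : ℕ → ℕ) (t : ℕ) : ℕ :=
  (2 * a + 1) * (g (t % q) - 1) + 1 + offV a (2 * a - t / q) (t % q % 2)

def prodE (a q : ℕ) (e : ℕ → ℕ) (t : ℕ) : ℕ :=
  (2 * a + 1) * (e (t % q) - 1) + 1 +
    (if t % q + 1 = q then offL a (2 * a - t / q) else offE a (2 * a - t / q))

theorem offV_lt (a x o : ℕ) (h : x ≤ 2 * a) : offV a x o < 2 * a + 1 := by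
  unfold offV; split_ifs <;> omega
theorem offE_lt (a x : ℕ) (h : x ≤ 2 * a) : offE a x < 2 * a + 1 := by
  unfold offE; split_ifs <;> omega
theorem offL_lt (a x : ℕ) (h : x ≤ 2 * a) : offL a x < 2 * a + 1 := by
  unfold offL; split_ifs <;> omega
theorem offV_inj (a x y o : ℕ) (h : x ≤ 2 * a) (h' : y ≤ 2 * a)
    (he : offV a x o = offV a y o) : x = y := by
  revert he; unfold offV; split_ifs <;> omega
theorem offE_inj (a x y : ℕ) (h : x ≤ 2 * a) (h' : y ≤ 2 * a)
    (he : offE a x = offE a y) : x = y := by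
  revert he; unfold offE; split_ifs <;> omega
theorem offL_inj (a x y : ℕ) (h : x ≤ 2 * a) (h' : y ≤ 2 * a)
    (he : offL a x = offL a y) : x = y := by
  revert he; unfold offL; split_ifs <;> omega

theorem lap_aux (a b : ℕ) (h : b + 1 < 2 * a + 1) :
    offV a (2 * a - b) 1 + offL a (2 * a - b) + offV a (2 * a - (b + 1)) (0 % 2) = 3 * a := by
  simp only [offV, offL, Nat.zero_mod, if_true, one_ne_zero, if_false]
  split_ifs <;> omega

theorem lap_end (a : ℕ) :
    offV a (2 * a - 2 * a) 1 + offL a (2 * a - 2 * a) + offV a (2 * a - 0) 0 = 3 * a := by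
  simp only [Nat.sub_self, Nat.sub_zero, offV, offL]
  simp
  omega

theorem digit_inj {n A B x y : ℕ} (hx : x < n) (hy : y < n)
    (h : n * A + 1 + x = n * B + 1 + y) : A = B ∧ x = y := by
  have h' : x + n * A = y + n * B := by omega
  have hn : 0 < n := by omega
  have h1 := congrArg (· / n) h'
  have h2 := congrArg (· % n) h'
  simp only [Nat.add_mul_div_left _ _ hn, Nat.div_eq_of_lt hx, Nat.div_eq_of_lt hy,
    Nat.add_mul_mod_self_left, Nat.mod_eq_of_lt hx, Nat.mod_eq_of_lt hy] at h1 h2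
  omega

theorem range_aux {n A q x : ℕ} (hA : 1 ≤ A ∧ A ≤ 2 * q) (hx : x < n) :
    1 ≤ n * (A - 1) + 1 + x ∧ n * (A - 1) + 1 + x ≤ 2 * (n * q) := by
  obtain ⟨B, rfl⟩ : ∃ B, A = B + 1 := ⟨A - 1, by omega⟩
  have : n * (B + 1) ≤ n * (2 * q) := Nat.mul_le_mul_left _ hA.2
  constructor
  · omega
  · simp only [Nat.add_sub_cancel]; nlinarith

theorem sum_aux {n A B C k x y z a : ℕ} (hA : 1 ≤ A) (hB : 1 ≤ B) (hC : 1 ≤ C)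
    (h : A + B + C = k) (hs : x + y + z = 3 * a) :
    (n * (A - 1) + 1 + x) + (n * (B - 1) + 1 + y) + (n * (C - 1) + 1 + z)
      = n * (k - 3) + 3 + 3 * a := by
  obtain ⟨A, rfl⟩ : ∃ B, A = B + 1 := ⟨A - 1, by omega⟩
  obtain ⟨B, rfl⟩ : ∃ D, B = D + 1 := ⟨B - 1, by omega⟩
  obtain ⟨C, rfl⟩ : ∃ B, C = B + 1 := ⟨C - 1, by omega⟩
  have : k - 3 = A + B + C := by omega
  rw [this]; simp only [Nat.add_sub_cancel]; linarith

theorem divmod_ext {q s t : ℕ} (h1 : s % q = t % q) (h2 : s / q = t / q) : s = t := by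
  rw [← Nat.div_add_mod s q, ← Nat.div_add_mod t q, h1, h2]

theorem EMCyc.prod {q : ℕ} {g e : ℕ → ℕ} {k : ℕ} (h : EMCyc q g e k) (a : ℕ)
    (hq : 0 < q) (hq2 : q % 2 = 0) :
    EMCyc ((2 * a + 1) * q) (prodV a q g) (prodE a q e)
      ((2 * a + 1) * (k - 3) + 3 + 3 * a) := by
  have hlt : ∀ t < (2 * a + 1) * q, t / q < 2 * a + 1 := fun t ht =>
    Nat.div_lt_of_lt_mul (by rw [mul_comm]; exact ht)
  have hmod : ∀ t, t % q < q := fun t => Nat.mod_lt _ hq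
  have hE : ∀ t, (if t % q + 1 = q then offL a (2 * a - t / q) else offE a (2 * a - t / q))
      < 2 * a + 1 := by
    intro t; split_ifs
    · exact offL_lt _ _ (Nat.sub_le _ _)
    · exact offE_lt _ _ (Nat.sub_le _ _)
  have hV : ∀ t, offV a (2 * a - t / q) (t % q % 2) < 2 * a + 1 := fun t =>
    offV_lt _ _ _ (Nat.sub_le _ _)
  constructor
  · intro t ht; exact range_aux (h.vr _ (hmod t)) (hV t)
  · intro t ht; exact range_aux (h.er _ (hmod t)) (hE t)
  · intro s hs t ht hst
    obtain ⟨h1, h2⟩ := digit_inj (hV s) (hV t) hst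
    have r1 := h.vr _ (hmod s)
    have r2 := h.vr _ (hmod t)
    have h3 := h.vi _ (hmod s) _ (hmod t) (by omega)
    rw [h3] at h2
    have h4 := offV_inj _ _ _ _ (Nat.sub_le _ _) (Nat.sub_le _ _) h2
    have l1 := hlt s hs
    have l2 := hlt t ht
    exact divmod_ext h3 (by omega)
  · intro s hs t ht hst
    obtain ⟨h1, h2⟩ := digit_inj (hE s) (hE t) hst
    have r1 := h.er _ (hmod s)
    have r2 := h.er _ (hmod t)
    have h3 := h.ei _ (hmod s) _ (hmod t) (by omega)
    rw [h3] at h2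
    have h4 : 2 * a - s / q = 2 * a - t / q := by
      split_ifs at h2
      · exact offL_inj _ _ _ (Nat.sub_le _ _) (Nat.sub_le _ _) h2
      · exact offE_inj _ _ _ (Nat.sub_le _ _) (Nat.sub_le _ _) h2
    have l1 := hlt s hs
    have l2 := hlt t ht
    exact divmod_ext h3 (by omega)
  · intro s hs t ht hst
    obtain ⟨h1, h2⟩ := digit_inj (hV s) (hE t) hst
    have r1 := h.vr _ (hmod s)
    have r2 := h.er _ (hmod t)
    exact h.ve _ (hmod s) _ (hmod t) (by omega)
  · intro t ht
    have l1 := hlt t (by omega)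
    have l2 := hlt _ ht
    have hm := hmod t
    have dm := Nat.div_add_mod t q
    by_cases hc : t % q + 1 = q
    · have e0 : t + 1 = q * (t / q + 1) := by rw [mul_add]; omega
      have e1 : (t + 1) % q = 0 := by rw [e0]; exact Nat.mul_mod_right _ _
      have e2 : (t + 1) / q = t / q + 1 := by rw [e0]; exact Nat.mul_div_cancel_left _ hq
      have hs := h.s2
      have e3 : t % q = q - 1 := by omega
      have e4 : (q - 1) % 2 = 1 := by omega
      have e5 : q - 1 + 1 = q := by omega
      unfold prodV prodE
      rw [e1, e2, e3, e4]
      refine sum_aux (h.vr _ (by omega)).1 (h.er _ (by omega)).1 (h.vr _ hq).1 hs ?_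
      rw [if_pos e5]
      rw [e2] at l2
      exact lap_aux _ _ l2
    · have e1 : (t + 1) % q = t % q + 1 := by
        rw [← dm, add_assoc, Nat.mul_add_mod, Nat.mul_add_mod, Nat.mod_mod]
        exact Nat.mod_eq_of_lt (by omega)
      have e2 : (t + 1) / q = t / q := by
        conv_lhs => rw [← dm, add_assoc, Nat.mul_add_div hq,
          Nat.div_eq_of_lt (show t % q + 1 < q by omega)]
        rfl
      unfold prodV prodE
      rw [e1, e2]
      refine sum_aux (h.vr _ (by omega)).1 (h.er _ (by omega)).1 (h.vr _ (by omega)).1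
        (h.s1 _ (by omega)) ?_
      rw [if_neg hc]
      generalize t / q = b at *
      generalize t % q = c at *
      unfold offV offE; split_ifs <;> omega
  · have e0 : (2 * a + 1) * q - 1 = q * (2 * a) + (q - 1) := by
      have : (2 * a + 1) * q = q * (2 * a) + q := by ring
      omega
    have e1 : ((2 * a + 1) * q - 1) % q = q - 1 := by
      rw [e0, Nat.mul_add_mod]; exact Nat.mod_eq_of_lt (by omega)
    have e2 : ((2 * a + 1) * q - 1) / q = 2 * a := by
      rw [e0, Nat.mul_add_div hq, Nat.div_eq_of_lt (by omega)]; rfl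
    have e4 : (q - 1) % 2 = 1 := by omega
    have e5 : q - 1 + 1 = q := by omega
    unfold prodV prodE
    rw [e1, e2, e4, Nat.zero_mod, Nat.zero_div]
    refine sum_aux (h.vr _ (by omega)).1 (h.er _ (by omega)).1 (h.vr _ hq).1 h.s2 ?_
    rw [if_pos e5]
    exact lap_end a

theorem exists_base (q : ℕ) (hq : 4 ≤ q) (h2 : q % 2 = 0) :
    ∃ g e, EMCyc q g e (5 * (q / 2) + 2) := by
  rcases (show q % 4 = 0 ∨ q % 4 = 2 by omega) with h | h
  · obtain ⟨r, rfl⟩ : ∃ r, q = 4 * r := ⟨q / 4, by omega⟩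
    have := base0 r (by omega)
    rw [show 5 * (4 * r / 2) + 2 = 10 * r + 2 by omega]
    exact ⟨_, _, this⟩
  · obtain ⟨r, rfl⟩ : ∃ r, q = 4 * r + 2 := ⟨q / 4, by omega⟩
    have := base2 r (by omega)
    rw [show 5 * ((4 * r + 2) / 2) + 2 = 10 * r + 7 by omega]
    exact ⟨_, _, this⟩

theorem exists_valence (m n : ℕ) (hodd : n % 2 = 1) (q : ℕ) (hm : m = n * q) (hq : 4 ≤ q)
    (h2 : q % 2 = 0) :
    ∃ fv fe, IsEdgeMagic (cycleEnds m) fv fe (5 * (m / 2) + n / 2 + 2) := by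
  obtain ⟨g, e, h⟩ := exists_base q hq h2
  obtain ⟨a, rfl⟩ : ∃ a, n = 2 * a + 1 := ⟨n / 2, by omega⟩
  obtain ⟨c, rfl⟩ : ∃ c, q = 2 * c := ⟨q / 2, by omega⟩
  have hp := (h.prod a (by omega) h2).isEdgeMagic
  subst hm
  have : (2 * a + 1) * (5 * (2 * c / 2) + 2 - 3) + 3 + 3 * a
      = 5 * ((2 * a + 1) * (2 * c) / 2) + (2 * a + 1) / 2 + 2 := by
    have e1 : (2 * a + 1) * (2 * c) / 2 = (2 * a + 1) * c := by
      rw [show (2 * a + 1) * (2 * c) = 2 * ((2 * a + 1) * c) by ring]; omega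
    have e2 : (2 * a + 1) / 2 = a := by omega
    have e3 : 2 * c / 2 = c := by omega
    rw [e1, e2, e3]
    obtain ⟨d, rfl⟩ : ∃ d, c = d + 1 := ⟨c - 1, by omega⟩
    rw [show 5 * (d + 1) + 2 - 3 = 5 * d + 4 by omega]
    ring
  rw [this] at hp
  exact ⟨_, _, hp⟩

theorem omega_lt_card_divisors (w : ℕ) (hw : w ≠ 0) :
    ArithmeticFunction.cardFactors w + 1 ≤ w.divisors.card := by
  induction w using Nat.strong_induction_on with
  | _ w ih =>
    by_cases h1 : w = 1
    · subst h1; simp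
    have hp := Nat.minFac_prime h1
    obtain ⟨v, hv⟩ := Nat.minFac_dvd w
    have hv0 : v ≠ 0 := by rintro rfl; simp at hv; exact hw hv
    have hlt : v < w := by
      have := hp.two_le
      have hpos := Nat.pos_of_ne_zero hv0
      calc v < 2 * v := by omega
        _ ≤ w.minFac * v := Nat.mul_le_mul_right _ this
        _ = w := hv.symm
    have hI := ih v hlt hv0
    have hO : ArithmeticFunction.cardFactors w = 1 + ArithmeticFunction.cardFactors v := by
      conv_lhs => rw [hv, ArithmeticFunction.cardFactors_mul hp.ne_zero hv0,
        ArithmeticFunction.cardFactors_apply_prime hp]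
    have hss : insert w v.divisors ⊆ w.divisors := by
      intro x hx
      rcases Finset.mem_insert.1 hx with rfl | hx
      · simp [hw]
      · exact Nat.mem_divisors.2 ⟨(Nat.dvd_of_mem_divisors hx).trans ⟨_, by rw [mul_comm]; exact hv⟩, hw⟩
    have hni : w ∉ v.divisors := fun hx => by
      have := Nat.divisor_le hx
      omega
    have := Finset.card_le_card hss
    rw [Finset.card_insert_of_notMem hni] at this
    omega

theorem exists_set (m w c : ℕ) (D : Finset ℕ) (hw : w % 2 = 1) (hD : ∀ n ∈ D, n ∣ w)
    (hm : m = 2 * c * w) (h4 : ∀ n ∈ D, 4 * n ≤ m) :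
    ∃ S : Finset ℕ, S.card = D.card ∧
      ∀ k ∈ S, ∃ fv fe, IsEdgeMagic (cycleEnds m) fv fe k := by
  have hodd : ∀ n ∈ D, n % 2 = 1 := fun n hn =>
    Nat.odd_iff.1 ((Nat.odd_iff.2 hw).of_dvd_nat (hD n hn))
  refine ⟨D.image (fun n => 5 * (m / 2) + n / 2 + 2), ?_, ?_⟩
  · apply Finset.card_image_of_injOn
    intro x hx y hy hxy
    have h1 := hodd x hx
    have h2 := hodd y hy
    simp only at hxy
    omega
  · intro k hk
    obtain ⟨n, hn, rfl⟩ := Finset.mem_image.1 hk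
    obtain ⟨u, hu⟩ := hD n hn
    have hmn : m = n * (2 * (c * u)) := by rw [hm, hu]; ring
    refine exists_valence m n (hodd n hn) (2 * (c * u)) hmn ?_ (by omega)
    have := h4 n hn
    have hn0 : 0 < n := by have := hodd n hn; omega
    rw [hmn, mul_comm] at this
    exact Nat.le_of_mul_le_mul_left this hn0

/-- for even m ≥ 4 with m = 2^α·p₁^{α₁}⋯p_k^{α_k}
(α = m.factorization 2, α₁+⋯+α_k = Ω(m) - α), the cycle C_m admits at least
α₁+⋯+α_k mutually different edge-magic valences, and at least
1+α₁+⋯+α_k of them when α ≥ 2. -/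
theorem evenCycle_valences_lowerBound (m : ℕ) (hm : 4 ≤ m) (heven : 2 ∣ m) :
    (∃ S : Finset ℕ,
      (m.factorization.sum fun _ e => e) - m.factorization 2 ≤ S.card ∧
      ∀ k ∈ S, ∃ fv fe, IsEdgeMagic (cycleEnds m) fv fe k) ∧
    (2 ≤ m.factorization 2 →
      ∃ S : Finset ℕ,
        (m.factorization.sum fun _ e => e) - m.factorization 2 + 1 ≤ S.card ∧
        ∀ k ∈ S, ∃ fv fe, IsEdgeMagic (cycleEnds m) fv fe k) := by
  have hm0 : m ≠ 0 := by omega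
  set α := m.factorization 2 with hα
  obtain ⟨w, hw⟩ : ∃ w, w = m / 2 ^ α := ⟨_, rfl⟩
  have hmw : m = 2 ^ α * w := by rw [hw]; exact (Nat.ordProj_mul_ordCompl_eq_self m 2).symm
  have hw0 : w ≠ 0 := by rintro rfl; simp at hmw; omega
  have hwodd : w % 2 = 1 := by
    have := Nat.not_dvd_ordCompl Nat.prime_two hm0
    rw [← hα, ← hw] at this
    omega
  have hα1 : 1 ≤ α := by
    rw [hα]; exact (Nat.prime_two.dvd_iff_one_le_factorization hm0).1 heven
  have hsum : (m.factorization.sum fun _ e => e) - α = ArithmeticFunction.cardFactors w := by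
    rw [← ArithmeticFunction.cardFactors_eq_sum_factorization]
    conv_lhs => rw [hmw]
    rw [ArithmeticFunction.cardFactors_mul (by positivity) hw0,
      ArithmeticFunction.cardFactors_apply_prime_pow Nat.prime_two]
    omega
  have hcard := omega_lt_card_divisors w hw0
  rw [hsum]
  have hmc : m = 2 * 2 ^ (α - 1) * w := by
    rw [← pow_succ', Nat.sub_add_cancel hα1]; exact hmw
  have hpos : 1 ≤ 2 ^ (α - 1) := Nat.one_le_two_pow
  constructor
  · obtain ⟨S, hS, hS'⟩ := exists_set m w (2 ^ (α - 1)) (w.divisors.erase w) hwodd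
      (fun n hn => Nat.dvd_of_mem_divisors (Finset.mem_of_mem_erase hn)) hmc
      (fun n hn => by
        obtain ⟨hne, hn⟩ := Finset.mem_erase.1 hn
        obtain ⟨u, hu⟩ := Nat.dvd_of_mem_divisors hn
        have hu2 : 2 ≤ u := by
          rcases u with _ | _ | u
          · simp at hu; omega
          · simp at hu; omega
          · omega
        calc 4 * n = 2 * 1 * (n * 2) := by ring
          _ ≤ 2 * 2 ^ (α - 1) * (n * u) := by gcongr
          _ = m := by rw [← hu]; exact hmc.symm)
    refine ⟨S, ?_, hS'⟩
    rw [hS, Finset.card_erase_of_mem (Nat.mem_divisors_self _ hw0)]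
    omega
  · intro hα2
    obtain ⟨S, hS, hS'⟩ := exists_set m w (2 ^ (α - 1)) w.divisors hwodd
      (fun n hn => Nat.dvd_of_mem_divisors hn) hmc
      (fun n hn => by
        have h1 := Nat.divisor_le hn
        calc 4 * n = 2 ^ 2 * n := by ring
          _ ≤ 2 ^ α * w := by gcongr; norm_num
          _ = m := hmw.symm)
    exact ⟨S, by omega, hS'⟩
end

section
/- Let m = p_1^{α_1} p_2^{α_2} ⋯ p_k^{α_k} be the prime factorization of an odd number m ≥ 3, where p_1,…,p_k are distinct odd primes. Then the cycle C_m admits edge-magic labelings realizing at least 1 + α_1 + ⋯ + α_k mutually different valences. -/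
/-- Super edge-magic vertex labels (0-based) of the odd cycle of length `n`. -/
def sLab (n i : ℕ) : ℕ := if i % 2 = 0 then i / 2 else (i + n) / 2

/-- The matching 0-based edge labels. -/
def eLab (n i : ℕ) : ℕ := if i + 1 = n then n - 1 else n - 2 - i

lemma sLab_lt {h i : ℕ} (hi : i < 2 * h + 1) : sLab (2 * h + 1) i < 2 * h + 1 := by
  unfold sLab; split_ifs <;> omega

lemma eLab_lt {h i : ℕ} (hi : i < 2 * h + 1) : eLab (2 * h + 1) i < 2 * h + 1 := by
  unfold eLab; split_ifs <;> omega

lemma sLab_inj {h i j : ℕ} (hi : i < 2 * h + 1) (hj : j < 2 * h + 1)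
    (H : sLab (2 * h + 1) i = sLab (2 * h + 1) j) : i = j := by
  unfold sLab at H; split_ifs at H <;> omega

lemma eLab_inj {h i j : ℕ} (hi : i < 2 * h + 1) (hj : j < 2 * h + 1)
    (H : eLab (2 * h + 1) i = eLab (2 * h + 1) j) : i = j := by
  unfold eLab at H; split_ifs at H <;> omega

lemma sLab_sum {h i : ℕ} (hi : i < 2 * h + 1) :
    sLab (2 * h + 1) i + eLab (2 * h + 1) i + sLab (2 * h + 1) ((i + 1) % (2 * h + 1))
      = 3 * h := by
  by_cases hc : i + 1 = 2 * h + 1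
  · rw [hc, Nat.mod_self]
    unfold sLab eLab; split_ifs <;> omega
  · rw [Nat.mod_eq_of_lt (by omega)]
    unfold sLab eLab; split_ifs <;> omega

/-- decoding `2 n x + y` with `y < 2 n` -/
lemma decode_pair {n x y x' y' : ℕ} (hy : y < 2 * n) (hy' : y' < 2 * n)
    (H : 2 * n * x + y = 2 * n * x' + y') : x = x' ∧ y = y' := by
  have h1 : x = x' := by
    have := congrArg (· / (2 * n)) H
    simpa [Nat.mul_add_div (show 2 * n > 0 by omega), Nat.div_eq_of_lt hy,
      Nat.div_eq_of_lt hy'] using this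
  subst h1
  exact ⟨rfl, by omega⟩

lemma mod_shift_inj {n c c' b : ℕ} (hc : c < n) (hc' : c' < n)
    (H : (c + b) % n = (c' + b) % n) : c = c' := by
  have : c ≡ c' [MOD n] := Nat.ModEq.add_right_cancel' b H
  exact Nat.ModEq.eq_of_lt_of_lt this hc hc'

lemma enc_lt {n q x y : ℕ} (hx : x < q) (hy : y < 2 * n) : 2 * n * x + y < 2 * (q * n) := by
  have : 2 * n * (x + 1) ≤ 2 * n * q := Nat.mul_le_mul_left _ hx
  nlinarith

lemma edgeMagic_of_factor (g h m : ℕ) (hm : m = (2 * g + 1) * (2 * h + 1)) (hm3 : 3 ≤ m) :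
    ∃ fv fe, IsEdgeMagic (cycleEnds m) fv fe (3 * m + 1 - h) := by
  obtain ⟨q, hq⟩ : ∃ q, q = 2 * g + 1 := ⟨_, rfl⟩
  obtain ⟨n, hn⟩ : ∃ n, n = 2 * h + 1 := ⟨_, rfl⟩
  have hmq : m = q * n := by rw [hm, hq, hn]
  have hq0 : 0 < q := by omega
  have hn0 : 0 < n := by omega
  have haq : ∀ j, j % q < q := fun j => Nat.mod_lt _ hq0
  have hcn : ∀ j, j < m → j / q < n := fun j hj => Nat.div_lt_of_lt_mul (by rw [← hmq]; exact hj)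
  have hrec : ∀ i j, i % q = j % q → i / q = j / q → i = j := fun i j h1 h2 => by
    rw [← Nat.div_add_mod i q, ← Nat.div_add_mod j q, h1, h2]
  have sqlt : ∀ a, a < q → sLab q a < q := by subst hq; exact fun a => sLab_lt
  have snlt : ∀ a, a < n → sLab n a < n := by subst hn; exact fun a => sLab_lt
  have eqlt : ∀ a, a < q → eLab q a < q := by subst hq; exact fun a => eLab_lt
  have enlt : ∀ a, a < n → eLab n a < n := by subst hn; exact fun a => eLab_lt
  have sqinj : ∀ a b, a < q → b < q → sLab q a = sLab q b → a = b := by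
    subst hq; exact fun a b => sLab_inj
  have sninj : ∀ a b, a < n → b < n → sLab n a = sLab n b → a = b := by
    subst hn; exact fun a b => sLab_inj
  have eqinj : ∀ a b, a < q → b < q → eLab q a = eLab q b → a = b := by
    subst hq; exact fun a b => eLab_inj
  have eninj : ∀ a b, a < n → b < n → eLab n a = eLab n b → a = b := by
    subst hn; exact fun a b => eLab_inj
  have sqsum : ∀ a, a < q → sLab q a + eLab q a + sLab q ((a + 1) % q) = 3 * g := by
    subst hq; exact fun a => sLab_sum
  have snsum : ∀ a, a < n → sLab n a + eLab n a + sLab n ((a + 1) % n) = 3 * h := by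
    subst hn; exact fun a => sLab_sum
  let T : ℕ → ℕ := fun j => sLab n ((j / q + (j % q) % 2) % n)
  have hT : ∀ j, T j < n := fun j => snlt _ (Nat.mod_lt _ hn0)
  let fv : Fin m → ℕ := fun j => 2 * n * sLab q (j.val % q) + T j.val + 1
  let fe : Fin m → ℕ := fun j => 2 * n * eLab q (j.val % q) + (n + eLab n (j.val / q)) + 1
  have hinj : Function.Injective (Sum.elim fv fe) := by
    rintro (i | i) (j | j) H
    · have H' : 2 * n * sLab q (i.val % q) + T i.val = 2 * n * sLab q (j.val % q) + T j.val :=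
        Nat.succ_injective H
      have h1 := hT i.val
      have h2 := hT j.val
      obtain ⟨hx, hy⟩ := decode_pair (by omega) (by omega) H'
      have ha := sqinj _ _ (haq _) (haq _) hx
      have hu := sninj _ _ (Nat.mod_lt _ hn0) (Nat.mod_lt _ hn0) hy
      rw [ha] at hu
      have hc := mod_shift_inj (hcn _ i.isLt) (hcn _ j.isLt) hu
      rw [Fin.ext (hrec _ _ ha hc)]
    · have H' : 2 * n * sLab q (i.val % q) + T i.val
          = 2 * n * eLab q (j.val % q) + (n + eLab n (j.val / q)) := Nat.succ_injective H
      have h1 := hT i.val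
      have h2 := enlt _ (hcn _ j.isLt)
      obtain ⟨hx, hy⟩ := decode_pair (by omega) (by omega) H'
      omega
    · have H' : 2 * n * eLab q (i.val % q) + (n + eLab n (i.val / q))
          = 2 * n * sLab q (j.val % q) + T j.val := Nat.succ_injective H
      have h1 := hT j.val
      have h2 := enlt _ (hcn _ i.isLt)
      obtain ⟨hx, hy⟩ := decode_pair (by omega) (by omega) H'
      omega
    · have H' : 2 * n * eLab q (i.val % q) + (n + eLab n (i.val / q))
          = 2 * n * eLab q (j.val % q) + (n + eLab n (j.val / q)) := Nat.succ_injective H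
      have h1 := enlt _ (hcn _ j.isLt)
      have h2 := enlt _ (hcn _ i.isLt)
      obtain ⟨hx, hy⟩ := decode_pair (by omega) (by omega) H'
      have ha := eqinj _ _ (haq _) (haq _) hx
      have hc := eninj _ _ (hcn _ i.isLt) (hcn _ j.isLt) (by omega)
      rw [Fin.ext (hrec _ _ ha hc)]
  refine ⟨fv, fe, hinj, ?_, ?_⟩
  · have hsub : Finset.univ.image (Sum.elim fv fe)
        ⊆ Finset.Icc 1 (Fintype.card (Fin m) + Fintype.card (Fin m)) := by
      intro x hx
      obtain ⟨z, -, rfl⟩ := Finset.mem_image.1 hx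
      rw [Finset.mem_Icc, Fintype.card_fin]
      rcases z with i | i
      · have h1 := hT i.val
        have := enc_lt (sqlt _ (haq i.val)) (show T i.val < 2 * n by omega)
        simp only [Sum.elim_inl, fv]
        omega
      · have h1 := enlt _ (hcn _ i.isLt)
        have := enc_lt (eqlt _ (haq i.val)) (show n + eLab n (i.val / q) < 2 * n by omega)
        simp only [Sum.elim_inr, fe]
        omega
    have heq := Finset.eq_of_subset_of_card_le hsub (by
      rw [Finset.card_image_of_injective _ hinj]
      simp)
    have := congrArg (fun s : Finset ℕ => (s : Set ℕ)) heq
    simpa using this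
  · intro i
    have hi := i.isLt
    obtain ⟨j, hj⟩ : ∃ j, j = i.val := ⟨_, rfl⟩
    have hjm : j < m := by omega
    have hdm := Nat.div_add_mod j q
    have ha := haq j
    have hc := hcn j hjm
    set a := j % q with hadef
    set c := j / q with hcdef
    -- next vertex
    have key : sLab q (((j + 1) % m) % q) = sLab q ((a + 1) % q) ∧
        T j + T ((j + 1) % m) = sLab n c + sLab n ((c + 1) % n) := by
      have hmodq : ((j + 1) % m) % q = (a + 1) % q := by
        rw [hmq, Nat.mod_mul_right_mod, hadef, Nat.mod_add_mod]
      refine ⟨by rw [hmodq], ?_⟩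
      have hTj : T j = sLab n ((c + a % 2) % n) := rfl
      have hTj' : T ((j + 1) % m)
          = sLab n ((((j + 1) % m) / q + ((a + 1) % q) % 2) % n) := by
        simp only [T]; rw [hmodq]
      have hdiv : ((j + 1) % m) / q = ((j + 1) / q) % n := by
        rw [hmq, Nat.mod_mul_right_div_self]
      rw [hTj, hTj', hdiv]
      by_cases hlast : a + 1 = q
      · have e1 : (j + 1) / q = c + 1 := by
          rw [← hdm, add_assoc, hlast, ← Nat.mul_succ, Nat.mul_div_cancel_left _ hq0]
        have e2 : a % 2 = 0 := by omega
        rw [e1, e2, hlast, Nat.mod_self]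
        simp [Nat.mod_eq_of_lt hc]
      · have e1 : (j + 1) / q = c := by
          rw [← hdm, add_assoc, Nat.mul_add_div hq0, Nat.div_eq_of_lt (by omega), add_zero]
        rw [e1, Nat.mod_eq_of_lt hc, Nat.mod_eq_of_lt (show a + 1 < q by omega)]
        rcases Nat.mod_two_eq_zero_or_one a with e2 | e2
        · have e3 : (a + 1) % 2 = 1 := by omega
          rw [e2, e3, add_zero, Nat.mod_eq_of_lt hc]
        · have e3 : (a + 1) % 2 = 0 := by omega
          rw [e2, e3, add_zero, Nat.mod_eq_of_lt hc, add_comm]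
    obtain ⟨k1, k2⟩ := key
    have s1 := sqsum a ha
    have s2 := snsum c hc
    simp only [cycleEnds, fv, fe, ← hj]
    rw [k1, ← hadef, ← hcdef]
    have s3 : 2 * n * sLab q a + 2 * n * eLab q a + 2 * n * sLab q ((a + 1) % q)
        = 2 * n * (3 * g) := by rw [← s1]; ring
    have s4 : m = 2 * (n * g) + n := by rw [hmq, hq]; ring
    have s5 : 2 * n * (3 * g) = 6 * (n * g) := by ring
    omega

lemma one_add_sum_le_prod_succ {ι : Type} (s : Finset ι) (f : ι → ℕ) :
    1 + ∑ i ∈ s, f i ≤ ∏ i ∈ s, (f i + 1) := by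
  classical
  induction s using Finset.induction_on with
  | empty => simp
  | insert a s ha ih =>
    rw [Finset.sum_insert ha, Finset.prod_insert ha]
    nlinarith [Nat.zero_le (f a * ∑ i ∈ s, f i), Nat.mul_le_mul_left (f a + 1) ih]

/-- for odd m ≥ 3 with Ω(m) = α₁+⋯+α_k prime factors counted
with multiplicity, the cycle C_m admits at least 1 + Ω(m) mutually different
edge-magic valences. -/
theorem oddCycle_valences_lowerBound (m : ℕ) (hm : 3 ≤ m) (hodd : Odd m) :
    ∃ S : Finset ℕ,
      (1 + m.factorization.sum fun _ e => e) ≤ S.card ∧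
      ∀ k ∈ S, ∃ fv fe, IsEdgeMagic (cycleEnds m) fv fe k := by
  refine ⟨m.divisors.image (fun n => 3 * m + 1 - n / 2), ?_, ?_⟩
  · rw [Finset.card_image_of_injOn, Nat.card_divisors (by omega)]
    · exact one_add_sum_le_prod_succ _ _
    · intro x hx y hy hxy
      have hx' := Nat.dvd_of_mem_divisors hx
      have hy' := Nat.dvd_of_mem_divisors hy
      have := Nat.le_of_dvd (by omega) hx'
      have := Nat.le_of_dvd (by omega) hy'
      obtain ⟨u, hu⟩ := hodd.of_dvd_nat hx'
      obtain ⟨v, hv⟩ := hodd.of_dvd_nat hy'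
      simp only at hxy
      omega
  · intro k hk
    obtain ⟨n, hn, rfl⟩ := Finset.mem_image.1 hk
    obtain ⟨q, hq⟩ := Nat.dvd_of_mem_divisors hn
    obtain ⟨h, hh⟩ := hodd.of_dvd_nat (Dvd.intro q hq.symm)
    obtain ⟨g, hg⟩ := hodd.of_dvd_nat (Dvd.intro_left n hq.symm)
    have : n / 2 = h := by omega
    simp only [this]
    exact edgeMagic_of_factor g h m (by rw [hq, hh, hg, mul_comm]) hm
end

section
/- Let G be a graph with p vertices and q edges where p = q, and suppose G admits a super edge-magic labeling f with valence val(f). Then G admits an edge-magic labeling with valence 2·val(f) − 2p − 2 and an edge-magic labeling with valence 2·val(f) − 2p − 1 (the odd labeling o(f), defined by o(f)(x) = 2f(x) − 1 on vertices, and the even labeling e(f), defined by e(f)(x) = 2f(x) on vertices, with the edge labels determined by the respective valences). -/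
/-- for a graph with p = q and a super edge-magic labeling
with valence k, the odd labeling x ↦ 2·f(x) - 1 and the even labeling
x ↦ 2·f(x) on vertices extend to edge-magic labelings with valences
2k - 2p - 2 and 2k - 2p - 1 respectively. -/
theorem odd_even_labelings {V E : Type} [Fintype V] [Fintype E]
    (ends : E → V × V) (h : Fintype.card V = Fintype.card E)
    (fv : V → ℕ) (fe : E → ℕ) (k : ℕ)
    (hsem : IsSuperEdgeMagic ends fv fe k) :
    (∃ fe', IsEdgeMagic ends (fun x => 2 * fv x - 1) fe'
      (2 * k - 2 * Fintype.card V - 2)) ∧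
    (∃ fe', IsEdgeMagic ends (fun x => 2 * fv x) fe'
      (2 * k - 2 * Fintype.card V - 1)) := by
  obtain ⟨⟨hinj, hrange, hval⟩, hv⟩ := hsem
  have hvb : ∀ x, 1 ≤ fv x ∧ fv x ≤ Fintype.card V := fun x => by
    have : fv x ∈ Set.range fv := ⟨x, rfl⟩
    rw [hv] at this
    exact this
  have hvs : ∀ n, 1 ≤ n → n ≤ Fintype.card V → ∃ x, fv x = n := fun n h1 h2 => by
    have : n ∈ Set.range fv := by
      rw [hv]
      exact ⟨h1, h2⟩
    exact this
  have hvi : ∀ x y, fv x = fv y → x = y := fun x y hxy =>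
    Sum.inl_injective (hinj (a₁ := Sum.inl x) (a₂ := Sum.inl y) hxy)
  have hei : ∀ x y, fe x = fe y → x = y := fun x y hxy =>
    Sum.inr_injective (hinj (a₁ := Sum.inr x) (a₂ := Sum.inr y) hxy)
  have hve : ∀ x e, fv x ≠ fe e := fun x e hxe =>
    Sum.inl_ne_inr (hinj (a₁ := Sum.inl x) (a₂ := Sum.inr e) hxe)
  have heb : ∀ e, Fintype.card V + 1 ≤ fe e ∧ fe e ≤ 2 * Fintype.card V := fun e => by
    have h0 : fe e ∈ Set.range (Sum.elim fv fe) := ⟨Sum.inr e, rfl⟩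
    rw [hrange, Set.mem_Icc] at h0
    by_contra hc
    obtain ⟨x, hx⟩ := hvs (fe e) h0.1 (by omega)
    exact hve x e hx
  have hes : ∀ n, Fintype.card V + 1 ≤ n → n ≤ 2 * Fintype.card V → ∃ e, fe e = n :=
      fun n h1 h2 => by
    have h0 : n ∈ Set.range (Sum.elim fv fe) := by
      rw [hrange, Set.mem_Icc]
      omega
    obtain ⟨x | e, hx⟩ := h0
    · have := hvb x
      simp only [Sum.elim_inl] at hx
      omega
    · exact ⟨e, hx⟩
  refine ⟨⟨fun e => 2 * (fe e - Fintype.card V), ?_, ?_, ?_⟩,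
    ⟨fun e => 2 * (fe e - Fintype.card V) - 1, ?_, ?_, ?_⟩⟩
  · rintro (x | x) (y | y) hxy <;> simp only [Sum.elim_inl, Sum.elim_inr] at hxy
    · have := hvb x
      have := hvb y
      rw [hvi x y (by omega)]
    · have := hvb x
      omega
    · have := hvb y
      omega
    · have := heb x
      have := heb y
      rw [hei x y (by omega)]
  · ext n
    rw [Set.mem_Icc]
    constructor
    · rintro ⟨x | x, rfl⟩ <;> simp only [Sum.elim_inl, Sum.elim_inr]
      · have := hvb x
        omega
      · have := heb x
        omega
    · intro hn
      rcases Nat.even_or_odd' n with ⟨m, hm | hm⟩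
      · obtain ⟨e, he⟩ := hes (m + Fintype.card V) (by omega) (by omega)
        exact ⟨Sum.inr e, by simp only [Sum.elim_inr]; omega⟩
      · obtain ⟨x, hx⟩ := hvs (m + 1) (by omega) (by omega)
        exact ⟨Sum.inl x, by simp only [Sum.elim_inl]; omega⟩
  · intro e
    have := hval e
    have := heb e
    have := hvb (ends e).1
    have := hvb (ends e).2
    dsimp only
    omega
  · rintro (x | x) (y | y) hxy <;> simp only [Sum.elim_inl, Sum.elim_inr] at hxy
    · rw [hvi x y (by omega)]
    · have := heb y
      omega
    · have := heb x
      omega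
    · have := heb x
      have := heb y
      rw [hei x y (by omega)]
  · ext n
    rw [Set.mem_Icc]
    constructor
    · rintro ⟨x | x, rfl⟩ <;> simp only [Sum.elim_inl, Sum.elim_inr]
      · have := hvb x
        omega
      · have := heb x
        omega
    · intro hn
      rcases Nat.even_or_odd' n with ⟨m, hm | hm⟩
      · obtain ⟨x, hx⟩ := hvs m (by omega) (by omega)
        exact ⟨Sum.inl x, by simp only [Sum.elim_inl]; omega⟩
      · obtain ⟨e, he⟩ := hes (m + 1 + Fintype.card V) (by omega) (by omega)
        exact ⟨Sum.inr e, by simp only [Sum.elim_inr]; omega⟩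
  · intro e
    have := hval e
    have := heb e
    have := hvb (ends e).1
    have := hvb (ends e).2
    dsimp only
    omega
end

section
/- Let m ≥ 3 and n ≥ 1 be integers. Then every edge-magic labeling of the crown C_m ⊙ K̄_n has valence k satisfying (3+5m)/2 + 2mn ≤ k ≤ (3+7m)/2 + 4mn (as inequalities of rational numbers); that is, the magic interval of C_m ⊙ K̄_n is J = [⌈(3+5m)/2⌉ + 2mn, ⌊(3+7m)/2⌋ + 4mn]. -/
theorem crown_aux_finset (s : Finset ℕ) : (∀ x ∈ s, 1 ≤ x) →
    s.card * (s.card + 1) ≤ 2 * ∑ x ∈ s, x := by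
  induction s using Finset.induction_on_max with
  | empty => simp
  | insert a s hlt ih =>
    intro h
    have hn : a ∉ s := fun h' => lt_irrefl _ (hlt a h')
    have ih' := ih (fun x hx => h x (Finset.mem_insert_of_mem hx))
    have hsub : insert a s ⊆ Finset.Icc 1 a := by
      intro x hx
      rw [Finset.mem_Icc]
      refine ⟨h x hx, ?_⟩
      rcases Finset.mem_insert.1 hx with rfl | h'
      · exact le_rfl
      · exact (hlt x h').le
    have hc := Finset.card_le_card hsub
    rw [Finset.card_insert_of_notMem hn, Nat.card_Icc] at hc
    rw [Finset.card_insert_of_notMem hn, Finset.sum_insert hn]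
    have : s.card + 1 ≤ a := by omega
    nlinarith

theorem crown_aux_fin (m : ℕ) (f : Fin m → ℕ) (hf : Function.Injective f)
    (h1 : ∀ i, 1 ≤ f i) : m * (m + 1) ≤ 2 * ∑ i, f i := by
  have h := crown_aux_finset (Finset.univ.image f) (by
    intro x hx
    obtain ⟨i, -, rfl⟩ := Finset.mem_image.1 hx
    exact h1 i)
  rw [Finset.card_image_of_injective _ hf, Finset.sum_image (fun a _ b _ hab => hf hab)] at h
  simpa using h

theorem crown_aux_shift (m : ℕ) (f : Fin m → ℕ) :
    ∑ i : Fin m, f ⟨(i.val + 1) % m, Nat.mod_lt _ i.pos⟩ = ∑ i, f i := by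
  have hinj : Function.Injective
      (fun i : Fin m => (⟨(i.val + 1) % m, Nat.mod_lt _ i.pos⟩ : Fin m)) := by
    intro i j hij
    have h : (i.val + 1) % m = (j.val + 1) % m := congrArg Fin.val hij
    have hi := i.isLt
    have hj := j.isLt
    have h' : i.val ≡ j.val [MOD m] := Nat.ModEq.add_right_cancel' 1 h
    exact Fin.ext (Nat.ModEq.eq_of_lt_of_lt h' hi hj)
  exact Function.Bijective.sum_comp (Finite.injective_iff_bijective.1 hinj) f

/-- for m ≥ 3 and n ≥ 1, every edge-magic labeling of the
crown C_m ⊙ K̄_n has valence k with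
(3+5m)/2 + 2mn ≤ k ≤ (3+7m)/2 + 4mn (inequalities of rational numbers). -/
theorem crown_magicInterval (m n : ℕ) (hm : 3 ≤ m) (hn : 1 ≤ n) :
    ∀ fv fe k, IsEdgeMagic (crownEnds m n) fv fe k →
      (3 + 5 * (m : ℚ)) / 2 + 2 * m * n ≤ (k : ℚ) ∧
      (k : ℚ) ≤ (3 + 7 * (m : ℚ)) / 2 + 4 * m * n := by
  rintro fv fe k ⟨hinj, hrange, hk⟩
  obtain ⟨M, hM⟩ : ∃ M, M = 2 * (m + m * n) := ⟨_, rfl⟩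
  have hcard : Fintype.card (Fin m ⊕ Fin m × Fin n) + Fintype.card (Fin m ⊕ Fin m × Fin n) = M := by
    simp [hM]; ring
  rw [hcard] at hrange
  have hmem : ∀ x, 1 ≤ Sum.elim fv fe x ∧ Sum.elim fv fe x ≤ M := fun x => by
    have : Sum.elim fv fe x ∈ Set.Icc 1 M := hrange ▸ Set.mem_range_self x
    exact this
  have himg : Finset.univ.image (Sum.elim fv fe) = Finset.Icc 1 M := by
    apply Finset.coe_injective
    simpa using hrange
  have htot : ∑ x, Sum.elim fv fe x = ∑ x ∈ Finset.Icc 1 M, x := by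
    rw [← himg, Finset.sum_image (fun a _ b _ hab => hinj hab)]
  have hG : 2 * ∑ x ∈ Finset.Icc 1 M, x = M * (M + 1) := by
    clear * -
    induction M with
    | zero => simp
    | succ M ih => rw [Finset.sum_Icc_succ_top (by omega), mul_add, ih]; ring
  have hCinj : Function.Injective (fun i : Fin m => fv (Sum.inl i)) := by
    intro i j hij
    have := @hinj (Sum.inl (Sum.inl i)) (Sum.inl (Sum.inl j)) hij
    simpa using this
  have hCb : ∀ i : Fin m, 1 ≤ fv (Sum.inl i) ∧ fv (Sum.inl i) ≤ M := fun i =>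
    hmem (Sum.inl (Sum.inl i))
  have hlow := crown_aux_fin m _ hCinj (fun i => (hCb i).1)
  have hupp := crown_aux_fin m (fun i => M + 1 - fv (Sum.inl i))
    (by
      intro i j hij
      apply hCinj
      have h1 := hCb i
      have h2 := hCb j
      dsimp only at hij ⊢
      omega)
    (fun i => by have := hCb i; omega)
  have hsum2 : ∑ i : Fin m, (M + 1 - fv (Sum.inl i)) + ∑ i : Fin m, fv (Sum.inl i)
      = m * (M + 1) := by
    rw [← Finset.sum_add_distrib, Finset.sum_congr rfl (g := fun _ => M + 1)]
    · simp
    · intro i _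
      have := hCb i
      omega
  have hmain : ∑ e, (fv (crownEnds m n e).1 + fe e + fv (crownEnds m n e).2)
      = (m + m * n) * k := by
    rw [Finset.sum_congr rfl (fun e _ => hk e)]
    simp
  have hshift := crown_aux_shift m (fun i => fv (Sum.inl i))
  have hpend : ∑ p : Fin m × Fin n, fv (Sum.inl p.1) = n * ∑ i : Fin m, fv (Sum.inl i) := by
    rw [Fintype.sum_prod_type]
    simp [Finset.mul_sum]
  simp only [Fintype.sum_sum_type, Sum.elim_inl, Sum.elim_inr] at htot
  simp only [Fintype.sum_sum_type, crownEnds, Finset.sum_add_distrib] at hmain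
  rw [hpend] at hmain
  rw [hshift] at hmain
  generalize (∑ i : Fin m, fv (Sum.inl i)) = C at *
  generalize (∑ i : Fin m, (M + 1 - fv (Sum.inl i))) = D at *
  generalize ∑ x ∈ Finset.Icc 1 M, x = S at *
  have h1 : (m + m * n) * k = S + (n + 1) * C := by linarith
  have h2 : m * k = m * (M + 1) + C := by
    have : (n + 1) * (m * k) = (n + 1) * (m * (M + 1) + C) := by
      have e1 : 2 * S = 2 * ((m + m * n) * (M + 1)) := by rw [hG]; nth_rewrite 1 [hM]; ring
      have e2 : S = (m + m * n) * (M + 1) := by omega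
      rw [e2] at h1
      linarith
    exact Nat.eq_of_mul_eq_mul_left (by omega) this
  have hm0 : (0 : ℚ) < m := by exact_mod_cast (by omega : 0 < m)
  have q2 : (m : ℚ) * k = m * (M + 1) + C := by exact_mod_cast h2
  have q3 : (D : ℚ) + C = m * (M + 1) := by exact_mod_cast hsum2
  have q4 : (m : ℚ) * (m + 1) ≤ 2 * C := by exact_mod_cast hlow
  have q5 : (m : ℚ) * (m + 1) ≤ 2 * D := by exact_mod_cast hupp
  have q6 : (M : ℚ) = 2 * (m + m * n) := by exact_mod_cast hM
  rw [q6] at q2 q3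
  constructor
  · refine le_of_mul_le_mul_left ?_ hm0
    linarith
  · refine le_of_mul_le_mul_left ?_ hm0
    linarith
end
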